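/- Let μ₊ > 0 and set ρ₋ = (1 + 2μ₊)/(1 + 3μ₊). Let a, b, c be real numbers with a > b > c and a - b ≥ μ₊(b - c). Define b' = b - μ₊(c - b) and c' = c - μ₊(b - c). Then a - b' ≥ 0, b' - c' ≥ 0, and max(a - b', b' - c') ≥ ρ₋ (a - b). -/

import Mathlib

/-! The factor `(1 + 2μ) / (1 + 3μ)` is the weight for which the convex combination of the two new
gaps `a - b'` and `b' - c'` no longer involves `b - c`: it is that same factor times `a - b`, and a
convex combination is at most the maximum. -/

/-- The opinion of an individual with opinion `x` after a repulsive interaction, with divergent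
parameter `μ`, with an individual of opinion `y`: `b'` is `repel μ b c` and `c'` is
`repel μ c b`. -/
def repel {R : Type*} [Ring R] (μ x y : R) : R :=
  x - μ * (y - x)

section Gaps

variable {R : Type*} [CommRing R]

theorem sub_repel (μ a b c : R) : a - repel μ b c = (a - b) - μ * (b - c) := by
  unfold repel
  ring

theorem repel_sub_repel_swap (μ b c : R) :
    repel μ b c - repel μ c b = (1 + 2 * μ) * (b - c) := by
  unfold repel
  ring

theorem weighted_sum_gaps_repel (μ a b c : R) :
    (1 + 2 * μ) * (a - repel μ b c) + μ * (repel μ b c - repel μ c b) =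
      (1 + 2 * μ) * (a - b) := by
  rw [sub_repel, repel_sub_repel_swap]
  ring

end Gaps

section Order

variable {K : Type*} [Field K] [LinearOrder K] [IsStrictOrderedRing K] {μ : K}

theorem mul_sub_le_max_gaps_repel (hμ : 0 ≤ μ) (a b c : K) :
    (1 + 2 * μ) / (1 + 3 * μ) * (a - b) ≤
      max (a - repel μ b c) (repel μ b c - repel μ c b) := by
  have weights_sum : (1 + 2 * μ) / (1 + 3 * μ) + μ / (1 + 3 * μ) = 1 := by
    have : 1 + 3 * μ ≠ 0 := by positivity
    field_simp
    ring
  calc (1 + 2 * μ) / (1 + 3 * μ) * (a - b)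
      = (1 + 2 * μ) * (a - b) / (1 + 3 * μ) := div_mul_eq_mul_div _ _ _
    _ = (1 + 2 * μ) / (1 + 3 * μ) * (a - repel μ b c) +
          μ / (1 + 3 * μ) * (repel μ b c - repel μ c b) := by
        rw [← weighted_sum_gaps_repel μ a b c]
        ring
    _ ≤ max (a - repel μ b c) (repel μ b c - repel μ c b) :=
        Convex.combo_le_max _ _ (by positivity) (by positivity) weights_sum

theorem stmt_5_general {a b c : K} (hμ : 0 ≤ μ) (hcb : c ≤ b) (hcase : μ * (b - c) ≤ a - b) :
    0 ≤ a - repel μ b c ∧ 0 ≤ repel μ b c - repel μ c b ∧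
      (1 + 2 * μ) / (1 + 3 * μ) * (a - b) ≤
        max (a - repel μ b c) (repel μ b c - repel μ c b) := by
  refine ⟨?_, ?_, mul_sub_le_max_gaps_repel hμ a b c⟩
  · rw [sub_repel]
    exact sub_nonneg.mpr hcase
  · rw [repel_sub_repel_swap]
    exact mul_nonneg (by positivity) (sub_nonneg.mpr hcb)

end Order

/-- Case 2 in the proof of Lemma 3.4: with `ρ₋ = (1 + 2μ₊)/(1 + 3μ₊)`, if `a > b > c` and
`a - b ≥ μ₊(b - c)`, then `b' = b - μ₊(c - b)`, `c' = c - μ₊(b - c)` satisfy `a - b' ≥ 0`,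
`b' - c' ≥ 0` and `max(a - b', b' - c') ≥ ρ₋ (a - b)`. -/
theorem stmt_5 (μp : ℝ) (hμp : 0 < μp) (ρm : ℝ) (hρm : ρm = (1 + 2*μp) / (1 + 3*μp))
    (a b c : ℝ) (hab : b < a) (hbc : c < b) (hcase : μp * (b - c) ≤ a - b)
    (b' c' : ℝ) (hb' : b' = b - μp * (c - b)) (hc' : c' = c - μp * (b - c)) :
    0 ≤ a - b' ∧ 0 ≤ b' - c' ∧ ρm * (a - b) ≤ max (a - b') (b' - c') := by
  subst hρm hb' hc'
  exact stmt_5_general hμp.le hbc.le hcase
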